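/- Let F_n be the n×n free discrete Schrödinger matrix with eigenvalues λ_1 < ... < λ_n, and let S_n be the discrete Schrödinger matrix with diagonal b_1, b_2, 0, ..., 0 with eigenvalues μ_1 ≤ ... ≤ μ_n. If μ_k = λ_k and μ_{k+1} = λ_{k+1} for some k ∈ {1,...,n-1}, then b_1 = b_2 = 0, i.e. S_n = F_n. -/

import Mathlib

open Polynomial Matrix

/-- The `m × m` free discrete Schrödinger matrix. -/
def freeSchrodinger (m : ℕ) : Matrix (Fin m) (Fin m) ℝ :=
  Matrix.of fun i j : Fin m =>
    if i = j then 0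
    else if (i : ℕ) + 1 = (j : ℕ) ∨ (j : ℕ) + 1 = (i : ℕ) then 1 else 0

/-!
The characteristic polynomials `pₙ` of the free matrices are the rescaled Chebyshev polynomials.
Expanding along the first row, the perturbed one is `pₙ (1 + b₂ (X - b₁)) - pₙ₋₁ q` with
`q = b₁ + b₂ X (X - b₁)`, and `pₙ₋₁` does not vanish at the roots of `pₙ`, so every common
eigenvalue is a root of `q`. If `b₂ ≠ 0`, two common eigenvalues `a < b` satisfy
`a + b = b₁ = b₂ a b`. They have the same sign: consecutive free eigenvalues of opposite sign
satisfy `b = -a` by the symmetry of the spectrum, and then `a b = 0`. But then the inequality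
`pₙ₋₁² < pₙ' pₙ₋₁` at `a`, a consequence of the Christoffel–Darboux formula for the Wronskian of
`pₙ₋₁` and `pₙ`, forces the two characteristic polynomials to have derivatives of opposite sign at
`a`, which is impossible when `a` has the same position in both ordered spectra.
-/

section Determinant

variable {R : Type*} [CommRing R] {n : ℕ}

theorem det_submatrix_succ_succAbove_one (A : Matrix (Fin (n + 2)) (Fin (n + 2)) R)
    (hcol : ∀ i : Fin n, A i.succ.succ 0 = 0) :
    (A.submatrix Fin.succ (Fin.succAbove 1)).det =
      A 1 0 * (A.submatrix (fun i : Fin n => i.succ.succ) fun i => i.succ.succ).det := by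
  have hminor : (A.submatrix Fin.succ (Fin.succAbove 1)).submatrix (Fin.succAbove 0) Fin.succ =
      A.submatrix (fun i : Fin n => i.succ.succ) fun i => i.succ.succ := by
    ext i j
    simp
  rw [det_succ_column_zero, Fin.sum_univ_succ, hminor]
  simp [hcol]

theorem det_succ_succ_of_zero_outside_corner (A : Matrix (Fin (n + 2)) (Fin (n + 2)) R)
    (hrow : ∀ j : Fin n, A 0 j.succ.succ = 0) (hcol : ∀ i : Fin n, A i.succ.succ 0 = 0) :
    A.det = A 0 0 * (A.submatrix Fin.succ Fin.succ).det -
      A 0 1 * A 1 0 * (A.submatrix (fun i : Fin n => i.succ.succ) fun i => i.succ.succ).det := by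
  rw [det_succ_row_zero, Fin.sum_univ_succ, Fin.sum_univ_succ]
  simp only [hrow, Fin.succ_zero_eq_one, det_submatrix_succ_succAbove_one A hcol,
    Fin.succAbove_zero, Fin.val_zero, Fin.val_one, pow_zero, one_mul, pow_one, neg_mul, mul_zero,
    zero_mul, Finset.sum_const_zero, add_zero]
  ring

end Determinant

section Charpoly

variable {R : Type*} [CommRing R]

/-- The `n × n` discrete Schrödinger matrix with potential `d`. The potential is indexed by `ℕ`,
rather than by `Fin n`, so that deleting the first row and column shifts `d`. -/
def schrodinger (n : ℕ) (d : ℕ → R) : Matrix (Fin n) (Fin n) R :=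
  Matrix.of fun i j : Fin n =>
    if i = j then d i
    else if (i : ℕ) + 1 = (j : ℕ) ∨ (j : ℕ) + 1 = (i : ℕ) then 1 else 0

theorem charpoly_schrodinger_succ_succ (n : ℕ) (d : ℕ → R) :
    (schrodinger (n + 2) d).charpoly =
      (X - C (d 0)) * (schrodinger (n + 1) fun i => d (i + 1)).charpoly -
        (schrodinger n fun i => d (i + 2)).charpoly := by
  have hsucc : (schrodinger (n + 2) d).charmatrix.submatrix Fin.succ Fin.succ =
      (schrodinger (n + 1) fun i => d (i + 1)).charmatrix := by
    ext1 i j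
    simp [charmatrix_apply, diagonal_apply, schrodinger]
  have hsucc_succ : (schrodinger (n + 2) d).charmatrix.submatrix
      (fun i : Fin n => i.succ.succ) (fun i => i.succ.succ) =
      (schrodinger n fun i => d (i + 2)).charmatrix := by
    ext1 i j
    simp [charmatrix_apply, diagonal_apply, schrodinger]
  rw [charpoly, det_succ_succ_of_zero_outside_corner, hsucc, hsucc_succ]
  · simp [charpoly, schrodinger]
  · simp [schrodinger, Fin.ext_iff]
  · simp [schrodinger, Fin.ext_iff]

theorem charpoly_schrodinger_zero (n : ℕ) :
    (schrodinger n (0 : ℕ → R)).charpoly = Chebyshev.S R n := by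
  induction n using Nat.twoStepInduction with
  | zero => simp [charpoly]
  | one => simp [charpoly, schrodinger]
  | more n ih₀ ih₁ =>
    have hrec := charpoly_schrodinger_succ_succ n (0 : ℕ → R)
    simp only [Pi.zero_apply, C_0, sub_zero, ← Pi.zero_def, ih₀, ih₁] at hrec
    rw [hrec]
    push_cast
    rw [Chebyshev.S_add_two]

theorem charpoly_schrodinger_of_forall_succ_eq_zero (n : ℕ) {d : ℕ → R}
    (hd : ∀ i, d (i + 1) = 0) :
    (schrodinger (n + 1) d).charpoly = Chebyshev.S R (n + 1) - C (d 0) * Chebyshev.S R n := by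
  cases n with
  | zero => simp [charpoly, schrodinger]
  | succ n =>
    rw [charpoly_schrodinger_succ_succ]
    simp only [hd, ← Pi.zero_def, charpoly_schrodinger_zero]
    push_cast
    rw [add_assoc (n : ℤ), one_add_one_eq_two, Chebyshev.S_add_two]
    ring

theorem charpoly_schrodinger_of_forall_add_two_eq_zero (n : ℕ) {d : ℕ → R}
    (hd : ∀ i, d (i + 2) = 0) :
    (schrodinger (n + 2) d).charpoly =
      Chebyshev.S R (n + 2) * (1 + C (d 1) * (X - C (d 0))) -
        Chebyshev.S R (n + 1) * (C (d 0) + C (d 1) * X * (X - C (d 0))) := by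
  rw [charpoly_schrodinger_succ_succ, charpoly_schrodinger_of_forall_succ_eq_zero n hd]
  simp only [hd, ← Pi.zero_def, charpoly_schrodinger_zero, zero_add]
  linear_combination (-C (d 1) * (X - C (d 0)) - 1) * Chebyshev.S_add_two R n

theorem eval_derivative_charpoly_schrodinger {m : ℕ} {d : ℕ → R} (hd : ∀ i, d (i + 2) = 0)
    {a b : R} (hF : (Chebyshev.S R (m + 2)).eval a = 0) (hsum : a + b = d 0)
    (hmul : d 1 * (a * b) = d 0) :
    (derivative (schrodinger (m + 2) d).charpoly).eval a =
      (derivative (Chebyshev.S R (m + 2))).eval a * (1 - d 1 * b) +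
        (Chebyshev.S R (m + 1)).eval a * (d 1 * (b - a)) := by
  rw [charpoly_schrodinger_of_forall_add_two_eq_zero m hd]
  simp only [derivative_sub, derivative_mul, derivative_add, derivative_X, derivative_one,
    derivative_C, eval_sub, eval_mul, eval_add, eval_X, eval_one, eval_C, eval_zero, hF, ← hsum]
  rw [← hsum] at hmul
  linear_combination (derivative (Chebyshev.S R (m + 1))).eval a * hmul

end Charpoly

section Chebyshev

theorem eval_neg_chebyshevS {R : Type*} [CommRing R] (n : ℕ) (x : R) :
    (Chebyshev.S R n).eval (-x) = (-1) ^ n * (Chebyshev.S R n).eval x := by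
  induction n using Nat.twoStepInduction with
  | zero => simp
  | one => simp
  | more n ih₀ ih₁ =>
    push_cast at ih₁ ⊢
    simp only [Chebyshev.S_add_two, eval_sub, eval_mul, eval_X, ih₀, ih₁]
    ring

theorem wronskian_chebyshevS_eq_sum_sq {R : Type*} [CommRing R] (n : ℕ) :
    wronskian (Chebyshev.S R n) (Chebyshev.S R (n + 1)) =
      ∑ i ∈ Finset.range (n + 1), Chebyshev.S R i ^ 2 := by
  induction n with
  | zero => simp [wronskian]
  | succ n ih =>
    rw [Finset.sum_range_succ, ← ih]
    push_cast
    rw [add_assoc (n : ℤ), one_add_one_eq_two, Chebyshev.S_add_two]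
    simp only [wronskian, derivative_sub, derivative_mul, derivative_X]
    ring

theorem sq_eval_chebyshevS_lt_derivative_mul {R : Type*} [CommRing R] [LinearOrder R]
    [IsStrictOrderedRing R] (n : ℕ) {x : R} (hx : (Chebyshev.S R (n + 2)).eval x = 0) :
    (Chebyshev.S R (n + 1)).eval x ^ 2 <
      (derivative (Chebyshev.S R (n + 2))).eval x * (Chebyshev.S R (n + 1)).eval x := by
  have hW := congrArg (eval x) (wronskian_chebyshevS_eq_sum_sq (R := R) (n + 1))
  rw [Finset.sum_range_succ, Finset.sum_range_succ'] at hW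
  push_cast at hW
  rw [add_assoc (n : ℤ), one_add_one_eq_two] at hW
  simp only [wronskian, eval_sub, eval_add, eval_mul, eval_pow, eval_finsetSum, hx, mul_zero,
    sub_zero, Chebyshev.S_zero, eval_one, one_pow] at hW
  have hsum : 0 ≤ ∑ i ∈ Finset.range n, (Chebyshev.S R (i + 1)).eval x ^ 2 :=
    Finset.sum_nonneg fun i _ => sq_nonneg _
  linarith

end Chebyshev

section Roots

variable {R ι : Type*} [CommRing R] [Fintype ι]

theorem eval_prod_X_sub_C_eq_zero_iff [IsDomain R] {v : ι → R} {x : R} :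
    (∏ i, (X - C (v i))).eval x = 0 ↔ x ∈ Set.range v := by
  simp [eval_prod, Finset.prod_eq_zero_iff, sub_eq_zero, eq_comm (a := x)]

theorem eval_derivative_prod_mul_nonneg_of_monovary [LinearOrder R] [IsStrictOrderedRing R]
    {u v : ι → R} (huv : Monovary u v) (i : ι) :
    0 ≤ (derivative (∏ j, (X - C (u j)))).eval (u i) *
      (derivative (∏ j, (X - C (v j)))).eval (v i) := by
  classical
  simp only [← Lagrange.nodal_eq, Lagrange.eval_nodal_derivative_eval_node_eq (Finset.mem_univ i),
    Lagrange.eval_nodal, ← Finset.prod_mul_distrib]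
  exact Finset.prod_nonneg fun j _ => monovary_iff_forall_mul_nonneg.mp huv j i

end Roots

theorem eq_neg_of_monotone_of_covBy {ι α : Type*} [LinearOrder ι] [AddCommGroup α] [LinearOrder α]
    [IsOrderedAddMonoid α] {v : ι → α} (hv : Monotone v)
    (hneg : ∀ x ∈ Set.range v, -x ∈ Set.range v) {i j : ι} (hij : i ⋖ j)
    (hi : v i < 0) (hj : 0 < v j) : v j = -v i := by
  obtain ⟨p, hp⟩ := hneg (v i) ⟨i, rfl⟩
  obtain ⟨q, hq⟩ := hneg (v j) ⟨j, rfl⟩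
  have hjp : j ≤ p := hij.ge_of_gt <| hv.reflect_lt <| by
    rw [hp]; exact hi.trans (neg_pos.mpr hi)
  have hqi : q ≤ i := hij.le_of_lt <| hv.reflect_lt <| by
    rw [hq]; exact (neg_neg_of_pos hj).trans hj
  refine le_antisymm (hp ▸ hv hjp) ?_
  rw [neg_le, ← hq]
  exact hv hqi

section Quadratic

variable {R : Type*} [CommRing R]

theorem add_eq_and_mul_eq_of_quadratic_eq_zero [NoZeroDivisors R] {s t a b : R} (ht : t ≠ 0)
    (hab : a ≠ b) (ha : s + t * a * (a - s) = 0) (hb : s + t * b * (b - s) = 0) :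
    a + b = s ∧ t * (a * b) = s := by
  have hsum : a + b = s := by
    have hprod : t * (a - b) * (a + b - s) = 0 := by linear_combination ha - hb
    exact sub_eq_zero.mp <|
      (mul_eq_zero.mp hprod).resolve_left (mul_ne_zero ht (sub_ne_zero.mpr hab))
  exact ⟨hsum, by linear_combination -ha + t * a * hsum⟩

variable [LinearOrder R] [IsStrictOrderedRing R]

theorem mul_pos_of_mul_mul_eq_add {t a b : R} (hab : a < b) (ht : t ≠ 0)
    (hmul : t * (a * b) = a + b) (hneg : a < 0 → 0 < b → b = -a) : 0 < a * b := by
  have hsum : a + b ≠ 0 := by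
    intro h
    have hzero : a * b = 0 := by simpa [h, ht] using hmul
    rcases mul_eq_zero.mp hzero with rfl | rfl
    · exact hab.ne (by simpa using h.symm)
    · exact hab.ne (by simpa using h)
  have hprod : a * b ≠ 0 := fun h => hsum (by rw [← hmul, h, mul_zero])
  by_contra hle
  rcases mul_neg_iff.mp (lt_of_le_of_ne (not_lt.mp hle) hprod) with ⟨ha, hb⟩ | ⟨ha, hb⟩
  · exact hab.not_gt (hb.trans ha)
  · exact hsum (by rw [hneg ha hb, add_neg_cancel])

theorem mul_neg_of_mul_mul_eq_add {t a b p q : R} (hpos : 0 < a * b)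
    (hmul : t * (a * b) = a + b) (hpq : q ^ 2 < p * q) :
    (p * (1 - t * b) + q * (t * (b - a))) * p < 0 := by
  have hb : 0 < b ^ 2 := sq_pos_of_ne_zero (right_ne_zero_of_mul hpos.ne')
  have hpq_pos : 0 < p * q := (sq_nonneg q).trans_lt hpq
  have hpq_lt : p * q < p ^ 2 := by nlinarith [sq_nonneg (p - q)]
  have hscaled : a * b * ((p * (1 - t * b) + q * (t * (b - a))) * p) < 0 := by
    calc a * b * ((p * (1 - t * b) + q * (t * (b - a))) * p)
        = b ^ 2 * (p * q) - a ^ 2 * (p * q) - b ^ 2 * p ^ 2 := by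
          linear_combination (-b * p ^ 2 + (b - a) * (p * q)) * hmul
      _ ≤ b ^ 2 * (p * q) - b ^ 2 * p ^ 2 := by
          linarith [mul_nonneg (sq_nonneg a) hpq_pos.le]
      _ < 0 := sub_neg.mpr (mul_lt_mul_of_pos_left hpq_lt hb)
  exact (pos_iff_neg_of_mul_neg hscaled).mp hpos

end Quadratic

section Ambarzumian

variable {R : Type*} [CommRing R] [LinearOrder R] [IsStrictOrderedRing R]

theorem schrodinger_quadratic_eq_zero_of_common_root {m : ℕ} {d : ℕ → R}
    (hd : ∀ i, d (i + 2) = 0) {x : R} (hF : (Chebyshev.S R (m + 2)).eval x = 0)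
    (hP : (schrodinger (m + 2) d).charpoly.eval x = 0) :
    d 0 + d 1 * x * (x - d 0) = 0 := by
  have hG : (Chebyshev.S R (m + 1)).eval x ≠ 0 := fun h => by
    simpa [h] using sq_eval_chebyshevS_lt_derivative_mul m hF
  rw [charpoly_schrodinger_of_forall_add_two_eq_zero m hd] at hP
  simp only [eval_sub, eval_add, eval_mul, eval_one, eval_X, eval_C, hF, zero_mul, zero_sub,
    neg_eq_zero] at hP
  exact (mul_eq_zero.mp hP).resolve_left hG

theorem derivative_charpoly_schrodinger_mul_neg {m : ℕ} {d : ℕ → R}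
    (hd : ∀ i, d (i + 2) = 0) {a b : R} (hpos : 0 < a * b)
    (hF : (Chebyshev.S R (m + 2)).eval a = 0) (hsum : a + b = d 0) (hmul : d 1 * (a * b) = d 0) :
    (derivative (schrodinger (m + 2) d).charpoly).eval a *
      (derivative (Chebyshev.S R (m + 2))).eval a < 0 := by
  rw [eval_derivative_charpoly_schrodinger hd hF hsum hmul]
  exact mul_neg_of_mul_mul_eq_add hpos (hmul.trans hsum.symm)
    (sq_eval_chebyshevS_lt_derivative_mul m hF)

theorem ambarzumian_mixed_general {n : ℕ} {d : ℕ → R} (hd : ∀ i, d (i + 2) = 0)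
    {lam mu : Fin n → R} (hlam : StrictMono lam) (hmu : Monotone mu)
    (hcharF : (schrodinger n (0 : ℕ → R)).charpoly = ∏ i, (X - C (lam i)))
    (hcharS : (schrodinger n d).charpoly = ∏ i, (X - C (mu i)))
    {i j : Fin n} (hij : i ⋖ j) (hi : mu i = lam i) (hj : lam j ∈ Set.range mu) :
    d = 0 := by
  obtain ⟨m, rfl⟩ : ∃ m, n = m + 2 := ⟨n - 2, by have := hij.lt; omega⟩
  rw [charpoly_schrodinger_zero] at hcharF
  have hrootF (x : R) : (Chebyshev.S R ↑(m + 2)).eval x = 0 ↔ x ∈ Set.range lam := by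
    rw [hcharF, eval_prod_X_sub_C_eq_zero_iff]
  have hquad (l : Fin (m + 2)) (hl : lam l ∈ Set.range mu) :
      d 0 + d 1 * lam l * (lam l - d 0) = 0 :=
    schrodinger_quadratic_eq_zero_of_common_root hd ((hrootF _).mpr ⟨l, rfl⟩)
      (by rwa [hcharS, eval_prod_X_sub_C_eq_zero_iff])
  have hd1 : d 1 = 0 := by
    by_contra ht
    have hlt : lam i < lam j := hlam hij.lt
    obtain ⟨hsum, hmul⟩ :=
      add_eq_and_mul_eq_of_quadratic_eq_zero ht hlt.ne (hquad i ⟨i, hi⟩) (hquad j hj)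
    have hsymm : ∀ x ∈ Set.range lam, -x ∈ Set.range lam := fun x hx => by
      rw [← hrootF, eval_neg_chebyshevS, (hrootF x).mpr hx, mul_zero]
    have hpos : 0 < lam i * lam j := mul_pos_of_mul_mul_eq_add hlt ht (hmul.trans hsum.symm)
      (eq_neg_of_monotone_of_covBy hlam.monotone hsymm hij)
    have hsign :=
      eval_derivative_prod_mul_nonneg_of_monovary (hmu.monovary hlam.monotone) i
    rw [← hcharS, ← hcharF, hi] at hsign
    exact hsign.not_gt <|
      derivative_charpoly_schrodinger_mul_neg hd hpos ((hrootF _).mpr ⟨i, rfl⟩) hsum hmul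
  have hd0 : d 0 = 0 := by simpa [hd1] using hquad i ⟨i, hi⟩
  ext l
  match l with
  | 0 => exact hd0
  | 1 => exact hd1
  | l + 2 => exact hd l

end Ambarzumian

/-- Ambarzumian-type mixed inverse spectral theorem: if the ordered eigenvalues `μ` of
`S_n` (diagonal `b₁, b₂, 0, …, 0`) agree with two consecutive ordered eigenvalues of the
free matrix `F_n`, then `b₁ = b₂ = 0`, i.e. `S_n = F_n`. -/
theorem ambarzumian_mixed (n : ℕ) (b₁ b₂ : ℝ)
    (S : Matrix (Fin n) (Fin n) ℝ)
    (hS : S = Matrix.of fun i j : Fin n =>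
      if i = j then (if (i : ℕ) = 0 then b₁ else if (i : ℕ) = 1 then b₂ else 0)
      else if (i : ℕ) + 1 = (j : ℕ) ∨ (j : ℕ) + 1 = (i : ℕ) then 1 else 0)
    (lam : Fin n → ℝ) (hlam : StrictMono lam)
    (hcharF : (freeSchrodinger n).charpoly = ∏ i, (X - C (lam i)))
    (mu : Fin n → ℝ) (hmu : Monotone mu)
    (hcharS : S.charpoly = ∏ i, (X - C (mu i)))
    (k : ℕ) (hk : k + 1 < n)
    (h1 : mu ⟨k, by omega⟩ = lam ⟨k, by omega⟩)
    (h2 : mu ⟨k + 1, hk⟩ = lam ⟨k + 1, hk⟩) :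
    b₁ = 0 ∧ b₂ = 0 ∧ S = freeSchrodinger n := by
  subst hS
  have hd : (fun l : ℕ => if l = 0 then b₁ else if l = 1 then b₂ else 0) = 0 :=
    ambarzumian_mixed_general (by simp) hlam hmu hcharF hcharS
      (i := ⟨k, by omega⟩) (j := ⟨k + 1, hk⟩) (by simp) h1 ⟨_, h2⟩
  exact ⟨congrFun hd 0, congrFun hd 1, congrArg (schrodinger n) hd⟩
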